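/- arXiv:0707.4213 — 2 statements merged into one kernel-verified Lean document; each statement's English description precedes it below -/
import Mathlib

section
/- Let n ≥ 1, A = ℤ[x]/(x^{n+1}), and B = A ⊗_ℤ A, with A a B-module via the multiplication map. Then, as abelian groups: Ext^0_B(A,A) ≅ A (a free abelian group of rank n+1); for every q ≥ 1, Ext^{2q−1}_B(A,A) ≅ ℤ^n; and for every q ≥ 1, Ext^{2q}_B(A,A) ≅ ℤ^n ⊕ ℤ/(n+1)ℤ. -/
open Polynomial TensorProduct CategoryTheory

noncomputable section

/-- `A = ℤ[x]/(x^{n+1})`, the truncated polynomial ring. -/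
abbrev A (n : ℕ) : Type := AdjoinRoot ((X : ℤ[X]) ^ (n + 1))

/-- `B = A ⊗_ℤ A`. -/
abbrev B (n : ℕ) : Type := A n ⊗[ℤ] A n

/-- The class of `X` in `A`, i.e. the element `x`. -/
abbrev xA (n : ℕ) : A n := AdjoinRoot.root _

/-- `A` is a `B`-module via the multiplication map `μ(a ⊗ b) = ab`. -/
instance (n : ℕ) : Algebra (B n) (A n) :=
  (Algebra.TensorProduct.lmul' ℤ (S := A n)).toRingHom.toAlgebra

instance (n : ℕ) : HasDerivedCategory.{1} (ModuleCat.{0} (B n)) :=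
  HasDerivedCategory.standard _

instance (n : ℕ) : HasExt.{1} (ModuleCat.{0} (B n)) :=
  hasExt_of_hasDerivedCategory _

/-- `A` as an object of the category of `B`-modules. -/
def M (n : ℕ) : ModuleCat.{0} (B n) := ModuleCat.of (B n) (A n)

section General
universe w v u
variable {C : Type u} [Category.{v} C] [Abelian C] [HasExt.{w} C]

lemma ext_shift {S : ShortComplex C} (hS : S.ShortExact) [Projective S.X₂] (Y : C) (m : ℕ) :
    Nonempty (Abelian.Ext S.X₃ Y (m + 2) ≃+ Abelian.Ext S.X₁ Y (m + 1)) := by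
  refine ⟨(AddEquiv.ofBijective (hS.extClass.precomp Y (show 1 + (m + 1) = m + 2 by omega))
    ⟨?_, ?_⟩).symm⟩
  · rw [injective_iff_map_eq_zero]
    intro a ha
    obtain ⟨x, hx⟩ := Abelian.Ext.contravariant_sequence_exact₁ hS Y a
      (show 1 + (m + 1) = m + 2 by omega) ha
    rw [← hx, Abelian.Ext.eq_zero_of_projective x, Abelian.Ext.comp_zero]
  · intro a
    exact Abelian.Ext.contravariant_sequence_exact₃ hS Y a
      (Abelian.Ext.eq_zero_of_projective _) (show 1 + (m + 1) = m + 2 by omega)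

lemma ext_one {S : ShortComplex C} (hS : S.ShortExact) [Projective S.X₂] (Y : C)
    {G : Type*} [AddCommGroup G] (φ : (S.X₁ ⟶ Y) →+ G) (hφ : Function.Surjective φ)
    (hk : ∀ f, φ f = 0 ↔ ∃ g : S.X₂ ⟶ Y, S.f ≫ g = f) :
    Nonempty (Abelian.Ext S.X₃ Y 1 ≃+ G) := by
  let δ : (S.X₁ ⟶ Y) →+ Abelian.Ext S.X₃ Y 1 :=
    (hS.extClass.precomp Y (show 1 + 0 = 1 by omega)).comp
      (Abelian.Ext.addEquiv₀ (X := S.X₁) (Y := Y)).symm.toAddMonoidHom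
  have hδ : Function.Surjective δ := by
    intro a
    obtain ⟨x, hx⟩ := Abelian.Ext.contravariant_sequence_exact₃ hS Y a
      (Abelian.Ext.eq_zero_of_projective _) (show 1 + 0 = 1 by omega)
    exact ⟨Abelian.Ext.addEquiv₀ x, by simpa [δ] using hx⟩
  have hker : δ.ker = φ.ker := by
    ext f
    rw [AddMonoidHom.mem_ker, AddMonoidHom.mem_ker, hk]
    constructor
    · intro hf
      obtain ⟨x, hx⟩ := Abelian.Ext.contravariant_sequence_exact₁ hS Y
        (Abelian.Ext.mk₀ f) (show 1 + 0 = 1 by omega) hf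
      obtain ⟨g, rfl⟩ := Abelian.Ext.addEquiv₀.symm.surjective x
      refine ⟨g, ?_⟩
      apply Abelian.Ext.addEquiv₀.symm.injective
      simpa using hx
    · rintro ⟨g, rfl⟩
      have : δ (S.f ≫ g) = hS.extClass.comp (Abelian.Ext.mk₀ (S.f ≫ g)) (show 1 + 0 = 1 by omega) :=
        rfl
      rw [this, ← Abelian.Ext.mk₀_comp_mk₀]
      exact hS.extClass_comp_assoc _
  exact ⟨(QuotientAddGroup.quotientKerEquivOfSurjective δ hδ).symm.trans
    ((QuotientAddGroup.quotientAddEquivOfEq hker).trans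
      (QuotientAddGroup.quotientKerEquivOfSurjective φ hφ))⟩

end General

section Coord
variable (n : ℕ)

lemma xA_pow : (xA n) ^ (n + 1) = 0 := by
  have := AdjoinRoot.mk_self (f := (X : ℤ[X]) ^ (n + 1))
  rwa [map_pow, AdjoinRoot.mk_X] at this

lemma xA_pow_ge {k : ℕ} (hk : n + 1 ≤ k) : (xA n) ^ k = 0 := by
  obtain ⟨j, rfl⟩ := Nat.exists_eq_add_of_le hk
  rw [pow_add, xA_pow, zero_mul]

/-- The power basis of `A`. -/
def bA : Module.Basis (Fin (n + 1)) ℤ (A n) :=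
  (AdjoinRoot.powerBasis' (monic_X_pow (R := ℤ) (n + 1))).basis.reindex
    (finCongr (by simp))

lemma bA_apply (i : Fin (n + 1)) : bA n i = xA n ^ (i : ℕ) := by
  simp [bA]

lemma A_sum (a : A n) : a = ∑ i, (bA n).repr a i • xA n ^ (i : ℕ) := by
  conv_lhs => rw [← (bA n).sum_repr a]
  simp [bA_apply]

lemma pow_n_mul (a : A n) : xA n ^ n * a = (bA n).repr a 0 • xA n ^ n := by
  conv_lhs => rw [A_sum n a, Finset.mul_sum, Fin.sum_univ_succ]
  rw [Finset.sum_eq_zero]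
  · simp [mul_comm]
  · intro i _
    rw [mul_smul_comm, ← pow_add, xA_pow_ge, smul_zero]
    simp

lemma repr_pow_n : (bA n).repr (xA n ^ n) = Finsupp.single (Fin.last n) 1 := by
  have := (bA n).repr_self (Fin.last n)
  rwa [bA_apply] at this

/-- the element `s = x ⊗ 1 - 1 ⊗ x` -/
def sB : B n := xA n ⊗ₜ 1 - 1 ⊗ₜ xA n

/-- the element `t = ∑ x^i ⊗ x^(n-i)` -/
def tB : B n := ∑ i ∈ Finset.range (n + 1), (xA n ^ i) ⊗ₜ (xA n ^ (n - i))

/-- multiplication map -/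
def mu : B n →ₐ[ℤ] A n := Algebra.TensorProduct.lmul' ℤ (S := A n)

lemma smul_def' (b : B n) (a : A n) : b • a = mu n b * a := rfl

@[simp] lemma mu_tmul (a b : A n) : mu n (a ⊗ₜ b) = a * b := by simp [mu]

lemma mu_s : mu n (sB n) = 0 := by simp [sB]

lemma mu_t : mu n (tB n) = ((n : ℤ) + 1) • xA n ^ n := by
  simp only [tB, map_sum, mu_tmul]
  rw [Finset.sum_congr rfl (g := fun _ => xA n ^ n)]
  · simp
  · intro i hi
    rw [← pow_add]; congr 1; simp at hi; omega

lemma tB_eq : tB n = ∑ i ∈ Finset.range (n + 1),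
    (xA n ⊗ₜ[ℤ] (1 : A n)) ^ i * ((1 : A n) ⊗ₜ[ℤ] xA n) ^ (n + 1 - 1 - i) := by
  simp [tB]

lemma s_mul_t : sB n * tB n = 0 := by
  rw [tB_eq, mul_comm, sB, Commute.geom_sum₂_mul (Commute.all _ _)]
  simp only [Algebra.TensorProduct.tmul_pow, xA_pow]
  simp

lemma s_dvd (a : A n) : sB n ∣ a ⊗ₜ 1 - 1 ⊗ₜ a := by
  induction a using AdjoinRoot.induction_on with
  | ih p =>
    have h1 : (AdjoinRoot.mk (X ^ (n + 1)) p : A n) ⊗ₜ[ℤ] (1 : A n)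
        = aeval (xA n ⊗ₜ[ℤ] (1 : A n)) p := by
      rw [← AdjoinRoot.aeval_eq]
      exact (aeval_algHom_apply (Algebra.TensorProduct.includeLeft (R := ℤ) (S := ℤ) (A := A n) (B := A n)) (xA n) p).symm
    have h2 : (1 : A n) ⊗ₜ[ℤ] (AdjoinRoot.mk (X ^ (n + 1)) p : A n)
        = aeval ((1 : A n) ⊗ₜ[ℤ] xA n) p := by
      rw [← AdjoinRoot.aeval_eq]
      exact (aeval_algHom_apply (Algebra.TensorProduct.includeRight (R := ℤ) (A := A n) (B := A n)) (xA n) p).symm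
    rw [h1, h2]
    rw [aeval_def, aeval_def, ← Polynomial.eval_map, ← Polynomial.eval_map]
    exact sub_dvd_eval_sub _ _ _

lemma s_dvd_sub (b : B n) : sB n ∣ b - mu n b ⊗ₜ 1 := by
  induction b using TensorProduct.induction_on with
  | zero => simp
  | add a b ha hb =>
    have := dvd_add ha hb
    rw [map_add, TensorProduct.add_tmul]
    convert this using 1; ring
  | tmul a b =>
    have := (s_dvd n b).mul_left (-(a ⊗ₜ[ℤ] (1 : A n)))
    have e1 : (a ⊗ₜ[ℤ] (1 : A n)) * (b ⊗ₜ[ℤ] (1 : A n)) = (a * b) ⊗ₜ[ℤ] (1 : A n) := by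
      rw [Algebra.TensorProduct.tmul_mul_tmul, mul_one]
    have e2 : (a ⊗ₜ[ℤ] (1 : A n)) * ((1 : A n) ⊗ₜ[ℤ] b) = a ⊗ₜ[ℤ] b := by
      rw [Algebra.TensorProduct.tmul_mul_tmul, mul_one, one_mul]
    rw [mu_tmul, ← e1, ← e2]
    convert this using 1
    ring

lemma s_dvd_iff (b : B n) : mu n b = 0 ↔ sB n ∣ b := by
  constructor
  · intro h
    have := s_dvd_sub n b
    simpa [h] using this
  · rintro ⟨c, rfl⟩
    simp [mu_s]

lemma t_mul (b : B n) : tB n * b = tB n * (mu n b ⊗ₜ 1) := by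
  obtain ⟨c, hc⟩ := s_dvd_sub n b
  have : tB n * (b - mu n b ⊗ₜ 1) = 0 := by
    rw [hc, ← mul_assoc, mul_comm (tB n), s_mul_t, zero_mul]
  rwa [mul_sub, sub_eq_zero] at this

/-- basis of B over A -/
def bB : Module.Basis (Fin (n + 1)) (A n) (B n) := Algebra.TensorProduct.basis (A n) (bA n)

lemma bB_apply (i : Fin (n + 1)) : bB n i = 1 ⊗ₜ (xA n ^ (i : ℕ)) := by
  simp [bB, bA_apply]

/-- top coefficient -/
def topc : B n →ₗ[A n] A n := (bB n).coord (Fin.last n)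

lemma topc_pow (a : A n) (k : ℕ) (hk : k ≤ n) :
    topc n (a ⊗ₜ (xA n ^ k)) = if k = n then a else 0 := by
  have : a ⊗ₜ[ℤ] (xA n ^ k) = a • bB n ⟨k, by omega⟩ := by
    rw [bB_apply, TensorProduct.smul_tmul']; simp
  rw [this, map_smul, topc, Module.Basis.coord_apply, Module.Basis.repr_self]
  by_cases h : k = n
  · subst h; simp [Fin.last]
  · rw [Finsupp.single_eq_of_ne]
    · simp [h]
    · intro h'; apply h; have := congrArg Fin.val h'; simp at this; omega

lemma topc_t (a : A n) : topc n (tB n * (a ⊗ₜ 1)) = a := by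
  rw [tB, Finset.sum_mul, map_sum, Finset.sum_eq_single 0]
  · simp [topc_pow]
  · intro k hk hk0
    simp at hk
    rw [Algebra.TensorProduct.tmul_mul_tmul, mul_one, topc_pow _ _ _ (by omega), if_neg (by omega)]
  · simp

lemma topc_mul (b : B n) (a : A n) : topc n ((a ⊗ₜ 1) * b) = a * topc n b := by
  have : a • b = (a ⊗ₜ[ℤ] (1 : A n)) * b := by
    induction b using TensorProduct.induction_on with
    | zero => simp
    | add c d hc hd => rw [smul_add, mul_add, hc, hd]
    | tmul c d =>
      rw [Algebra.TensorProduct.tmul_mul_tmul, one_mul, TensorProduct.smul_tmul', smul_eq_mul]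
  rw [← this, map_smul, smul_eq_mul]

lemma topc_nondeg (b : B n) (hb : ∀ k, topc n (b * (1 ⊗ₜ (xA n ^ k))) = 0) : b = 0 := by
  -- show all coordinates vanish by strong induction
  have key : ∀ k : ℕ, ∀ i : Fin (n + 1), (i : ℕ) + k = n → (bB n).repr b i = 0 := by
    intro k i hik
    have h := hb k
    rw [← (bB n).sum_repr b, Finset.sum_mul, map_sum] at h
    have hc : ∀ j : Fin (n+1), topc n ((bB n).repr b j • bB n j * 1 ⊗ₜ (xA n ^ k)) =
        if j = i then (bB n).repr b j else 0 := by
      intro j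
      rw [smul_mul_assoc, map_smul, bB_apply, Algebra.TensorProduct.tmul_mul_tmul, ← pow_add]
      by_cases hj : (j : ℕ) + k ≤ n
      · rw [mul_one, topc_pow _ _ _ hj]
        by_cases hji : j = i
        · subst hji; simp [hik]
        · rw [if_neg hji, if_neg]; simp
          intro h'; apply hji; ext; omega
      · rw [xA_pow_ge n (by omega), TensorProduct.tmul_zero, map_zero, smul_zero, if_neg]
        rintro rfl; omega
    simpa [hc] using h
  apply (bB n).repr.injective
  ext i
  rw [key (n - i) i (by omega)]; simp

lemma s_mul_eq_zero (b : B n) (hb : sB n * b = 0) : b = tB n * (topc n b ⊗ₜ 1) := by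
  rw [← sub_eq_zero]
  set c := b - tB n * (topc n b ⊗ₜ 1) with hc
  have hs : sB n * c = 0 := by
    rw [hc, mul_sub, hb, ← mul_assoc, s_mul_t]; simp
  have h0 : topc n c = 0 := by rw [hc, map_sub, topc_t, sub_self]
  apply topc_nondeg
  intro k
  obtain ⟨d, hd⟩ := s_dvd n (xA n ^ k)
  have : c * (1 ⊗ₜ[ℤ] (xA n ^ k)) = ((xA n ^ k) ⊗ₜ[ℤ] 1) * c := by
    have h : c * ((xA n ^ k) ⊗ₜ[ℤ] 1 - 1 ⊗ₜ[ℤ] (xA n ^ k)) = 0 := by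
      rw [hd, ← mul_assoc, mul_comm c, hs, zero_mul]
    rw [mul_sub, sub_eq_zero] at h
    rw [← h, mul_comm]
  rw [this, topc_mul, h0, mul_zero]

end Coord

section Complexes
variable (n : ℕ)

/-- `μ` as a `B`-linear map -/
def muL : B n →ₗ[B n] A n := LinearMap.toSpanSingleton (B n) (A n) 1

lemma muL_apply (b : B n) : muL n b = mu n b := by
  simp [muL, smul_def']

lemma muL_surj : Function.Surjective (muL n) := fun a => ⟨a ⊗ₜ 1, by simp [muL_apply]⟩

/-- the kernel of `μ` -/
abbrev K : Submodule (B n) (B n) := LinearMap.ker (muL n)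

lemma mem_K (b : B n) : b ∈ K n ↔ sB n ∣ b := by
  rw [LinearMap.mem_ker, muL_apply, s_dvd_iff]

/-- `s` as an element of the kernel. -/
def sK : K n := ⟨sB n, (mem_K n _).2 dvd_rfl⟩

/-- `A → B`, `a ↦ t (a ⊗ 1)` -/
def jL : A n →ₗ[B n] B n where
  toFun a := tB n * (a ⊗ₜ 1)
  map_add' a b := by rw [TensorProduct.add_tmul, mul_add]
  map_smul' b a := by
    rw [smul_def', RingHom.id_apply, smul_eq_mul]
    have : b * (tB n * (a ⊗ₜ 1)) = tB n * (b * (a ⊗ₜ 1)) := by ring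
    rw [this, t_mul n (b * (a ⊗ₜ 1)), map_mul, mu_tmul, mul_one]

lemma jL_apply (a : A n) : jL n a = tB n * (a ⊗ₜ 1) := rfl

lemma jL_one : jL n 1 = tB n := by
  rw [jL_apply]; exact mul_one _

/-- `B → K`, multiplication by `s` -/
def rL : B n →ₗ[B n] K n := LinearMap.toSpanSingleton (B n) (K n) (sK n)

lemma rL_apply (b : B n) : rL n b = b • sK n := rfl

lemma rL_coe (b : B n) : (rL n b : B n) = b * sB n := rfl

lemma rL_surj : Function.Surjective (rL n) := by
  rintro ⟨b, hb⟩
  obtain ⟨c, hc⟩ := (mem_K n b).1 hb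
  refine ⟨c, Subtype.ext ?_⟩
  rw [rL_coe, mul_comm]; exact hc.symm

lemma exact_jr : Function.Exact (jL n) (rL n) := by
  intro b
  rw [Subtype.ext_iff, rL_coe]
  constructor
  · intro h
    exact ⟨topc n b, ((s_mul_eq_zero n b (by rw [mul_comm]; exact h)).symm)⟩
  · rintro ⟨a, rfl⟩
    rw [jL_apply, mul_comm, ← mul_assoc, s_mul_t, zero_mul]; rfl

/-- The short complex `K → B → A`. -/
def S1 : ShortComplex (ModuleCat.{0} (B n)) :=
  ShortComplex.mk (X₁ := ModuleCat.of (B n) (K n)) (X₂ := ModuleCat.of (B n) (B n)) (X₃ := M n)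
    (ModuleCat.ofHom (K n).subtype) (ModuleCat.ofHom (muL n)) (by
      ext x
      exact x.2)

lemma S1_exact : (S1 n).ShortExact where
  exact := (ShortComplex.ShortExact.moduleCat_exact_iff_function_exact _).2
    (LinearMap.exact_subtype_ker_map (muL n))
  mono_f := (ModuleCat.mono_iff_injective _).2 (Submodule.injective_subtype _)
  epi_g := (ModuleCat.epi_iff_surjective _).2 (muL_surj n)

/-- The short complex `A → B → K`. -/
def S2 : ShortComplex (ModuleCat.{0} (B n)) :=
  ShortComplex.mk (X₁ := M n) (X₂ := ModuleCat.of (B n) (B n)) (X₃ := ModuleCat.of (B n) (K n))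
    (ModuleCat.ofHom (jL n)) (ModuleCat.ofHom (rL n)) (by
      ext x
      exact congrArg Subtype.val ((exact_jr n).apply_apply_eq_zero x))

lemma S2_exact : (S2 n).ShortExact where
  exact := (ShortComplex.ShortExact.moduleCat_exact_iff_function_exact _).2 (exact_jr n)
  mono_f := (ModuleCat.mono_iff_injective _).2
    (Function.LeftInverse.injective (g := topc n) (topc_t n))
  epi_g := (ModuleCat.epi_iff_surjective _).2 (rL_surj n)

lemma proj_B : Projective (ModuleCat.of (B n) (B n)) :=
  (IsProjective.iff_projective _).1 inferInstance

instance : Projective (S1 n).X₂ := proj_B n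
instance : Projective (S2 n).X₂ := proj_B n

lemma mu_t_mul (a : A n) : mu n (tB n) * a = (((n : ℤ) + 1) * (bA n).repr a 0) • xA n ^ n := by
  rw [mu_t, smul_mul_assoc, pow_n_mul, smul_smul]

lemma coef_zero_iff (a : A n) : mu n (tB n) * a = 0 ↔ (bA n).repr a 0 = 0 := by
  rw [mu_t_mul]
  constructor
  · intro h
    have := congrArg (fun y => (bA n).repr y (Fin.last n)) h
    simp only [map_smul, repr_pow_n] at this
    simp at this
    rcases this with h | h
    · omega
    · exact h
  · intro h; simp [h]

/-- Evaluation of a morphism at `1 : A`. -/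
def ev1 : (M n ⟶ M n) ≃+ A n where
  toFun f := f.hom (1 : A n)
  invFun a := ModuleCat.ofHom (show A n →ₗ[B n] A n from
    { toFun := fun c => c * a
      map_add' := fun c d => add_mul c d a
      map_smul' := fun b c => mul_assoc _ _ _ })
  left_inv f := by
    ext c
    have h : f.hom ((c ⊗ₜ[ℤ] (1 : A n) : B n) • (1 : A n)) = _ := f.hom.map_smul _ _
    have h2 : (c ⊗ₜ[ℤ] (1 : A n) : B n) • (1 : A n) = c := by
      rw [smul_def', mu_tmul, mul_one, mul_one]
    rw [h2] at h
    refine Eq.trans ?_ h.symm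
    change c * _ = mu n _ * _
    rw [mu_tmul, mul_one]
  right_inv a := one_mul a
  map_add' f g := rfl

lemma ext_even : Nonempty (Abelian.Ext (S2 n).X₃ (M n) 1 ≃+ ((Fin n → ℤ) × ZMod (n + 1))) := by
  let ψ : A n →+ ((Fin n → ℤ) × ZMod (n + 1)) :=
    { toFun := fun a => (fun i => (bA n).repr a i.castSucc, ((bA n).repr a (Fin.last n) : ZMod (n + 1)))
      map_zero' := by ext <;> simp
      map_add' := fun a b => by ext <;> simp }
  have hψ : Function.Surjective ψ := by
    rintro ⟨v, z⟩
    obtain ⟨z, rfl⟩ := ZMod.intCast_surjective z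
    refine ⟨(bA n).equivFun.symm (Fin.snoc (α := fun _ => ℤ) v z), ?_⟩
    have : ∀ i, (bA n).repr ((bA n).equivFun.symm (Fin.snoc (α := fun _ => ℤ) v z)) i
        = Fin.snoc (α := fun _ => ℤ) v z i := by
      intro i
      rw [← Module.Basis.equivFun_apply, LinearEquiv.apply_symm_apply]
    ext
    · change (bA n).repr _ _ = _
      rw [this]; simp
    · change (((bA n).repr _ _ : ℤ) : ZMod (n + 1)) = _
      rw [this]; simp
  have hker : ∀ a, ψ a = 0 ↔ ∃ c, mu n (tB n) * c = a := by
    intro a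
    constructor
    · intro h
      have h1 : ∀ i : Fin n, (bA n).repr a i.castSucc = 0 := fun i => congrFun (congrArg Prod.fst h) i
      have h2 : (((bA n).repr a (Fin.last n) : ℤ) : ZMod (n + 1)) = 0 := congrArg Prod.snd h
      rw [ZMod.intCast_zmod_eq_zero_iff_dvd] at h2
      obtain ⟨k, hk⟩ := h2
      refine ⟨k • 1, ?_⟩
      rw [A_sum n a, Fin.sum_univ_castSucc]
      simp only [h1, zero_smul, Finset.sum_const_zero, zero_add, hk, mul_smul_comm, mul_one, mu_t]
      rw [smul_smul, Fin.val_last, mul_comm]; push_cast; rfl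
    · rintro ⟨c, rfl⟩
      rw [mu_t_mul]
      ext
      · rename_i i
        change (bA n).repr _ _ = _
        simp only [map_smul, repr_pow_n]
        simp
      · change (((bA n).repr _ _ : ℤ) : ZMod (n + 1)) = _
        simp only [map_smul, repr_pow_n]
        simp
  refine ext_one (S2_exact n) (M n) (ψ.comp (ev1 n).toAddMonoidHom)
    (hψ.comp (ev1 n).surjective) ?_
  intro f
  refine (hker (ev1 n f)).trans ?_
  constructor
  · rintro ⟨c, hc⟩
    refine ⟨ModuleCat.ofHom (LinearMap.toSpanSingleton (B n) (A n) c), (ev1 n).injective ?_⟩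
    rw [← hc]
    change (jL n 1) • c = _
    rw [jL_one]; rfl
  · rintro ⟨g, rfl⟩
    refine ⟨g.hom (1 : B n), ?_⟩
    change _ = g.hom (jL n 1)
    rw [jL_one]
    have : g.hom (tB n • (1 : B n)) = _ := g.hom.map_smul _ _
    rw [smul_eq_mul, mul_one] at this
    rw [this]; rfl

/-- Evaluation at `s` of a morphism `K → A`. -/
def evS : ((S1 n).X₁ ⟶ M n) →+ A n where
  toFun f := f.hom (sK n)
  map_zero' := rfl
  map_add' _ _ := rfl

lemma evS_smul (f : (S1 n).X₁ ⟶ M n) (b : B n) : f.hom (b • sK n) = b • evS n f :=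
  f.hom.map_smul b (sK n)

lemma evS_t (f : (S1 n).X₁ ⟶ M n) : mu n (tB n) * evS n f = 0 := by
  have ht : tB n • sK n = 0 := Subtype.ext (by
    change tB n * sB n = 0
    rw [mul_comm, s_mul_t])
  refine (evS_smul n f (tB n)).symm.trans ?_
  rw [ht]
  exact f.hom.map_zero

lemma evS_inj (f : (S1 n).X₁ ⟶ M n) (h : evS n f = 0) : f = 0 := by
  ext x
  obtain ⟨b, rfl⟩ := rL_surj n x
  refine (evS_smul n f b).trans ?_
  rw [h, smul_zero]
  rfl

lemma evS_comp (g : (S1 n).X₂ ⟶ M n) : evS n ((S1 n).f ≫ g) = 0 := by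
  have h : g.hom (sB n • (1 : B n)) = sB n • g.hom (1 : B n) := g.hom.map_smul _ _
  have h2 : sB n • (1 : B n) = sB n := by rw [smul_eq_mul, mul_one]
  have h3 : ∀ a : A n, sB n • a = 0 := fun a => by rw [smul_def', mu_s, zero_mul]
  rw [h2] at h
  exact h.trans (h3 _)

lemma evS_exists (a : A n) (hta : mu n (tB n) * a = 0) : ∃ f, evS n f = a := by
  let k : (S2 n).X₂ ⟶ M n := ModuleCat.ofHom (LinearMap.toSpanSingleton (B n) (A n) a)
  have hk : (S2 n).f ≫ k = 0 := by
    apply (ev1 n).injective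
    change (jL n 1) • a = 0
    rw [jL_one]; exact hta
  have := (S2_exact n).epi_g
  let f : (S1 n).X₁ ⟶ M n := (S2_exact n).exact.desc k hk
  have hf : (S2 n).g ≫ f = k := (S2_exact n).exact.g_desc k hk
  refine ⟨f, ?_⟩
  have h : f.hom (rL n 1) = (1 : B n) • a := congrArg (fun h => (h.hom (1 : B n) : A n)) hf
  have h1 := (evS_smul n f 1).symm.trans h
  have h2 : ∀ c : A n, (1 : B n) • c = c := fun c => by rw [smul_def', map_one, one_mul]
  exact (h2 _).symm.trans (h1.trans (h2 a))

lemma ext_odd : Nonempty (Abelian.Ext (S1 n).X₃ (M n) 1 ≃+ (Fin n → ℤ)) := by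
  let ρ : A n →+ (Fin n → ℤ) :=
    { toFun := fun a i => (bA n).repr a i.succ
      map_zero' := by ext i; simp
      map_add' := fun f g => by ext i; simp }
  refine ext_one (S1_exact n) (M n) (ρ.comp (evS n)) ?_ ?_
  · intro v
    let a : A n := (bA n).equivFun.symm (Fin.cons (α := fun _ => ℤ) 0 v)
    have ha : ∀ i, (bA n).repr a i = Fin.cons (α := fun _ => ℤ) 0 v i := by
      intro i
      rw [← Module.Basis.equivFun_apply, LinearEquiv.apply_symm_apply]
    obtain ⟨f, hf⟩ := evS_exists n a ((coef_zero_iff n a).2 (by rw [ha]; rfl))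
    refine ⟨f, ?_⟩
    ext i
    change (bA n).repr (evS n f) i.succ = _
    rw [hf, ha]; rfl
  · intro f
    constructor
    · intro h
      have h1 : ∀ i : Fin n, (bA n).repr (evS n f) i.succ = 0 := fun i => congrFun h i
      have h0 : (bA n).repr (evS n f) 0 = 0 := (coef_zero_iff n _).1 (evS_t n f)
      have hs : evS n f = 0 := by
        apply (bA n).repr.injective
        ext i
        refine Fin.cases ?_ ?_ i
        · simpa using h0
        · intro i; simpa using h1 i
      exact ⟨0, by rw [Limits.comp_zero, evS_inj n f hs]⟩
    · rintro ⟨g, rfl⟩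
      rw [AddMonoidHom.comp_apply, evS_comp, map_zero]

lemma ext_all (q : ℕ) :
    Nonempty (Abelian.Ext (M n) (M n) (2 * q + 1) ≃+ (Fin n → ℤ)) ∧
    Nonempty (Abelian.Ext (M n) (M n) (2 * q + 2) ≃+ ((Fin n → ℤ) × ZMod (n + 1))) := by
  induction q with
  | zero =>
    refine ⟨ext_odd n, ?_⟩
    obtain ⟨e⟩ := ext_shift (S1_exact n) (M n) 0
    obtain ⟨e'⟩ := ext_even n
    exact ⟨e.trans e'⟩
  | succ q ih =>
    obtain ⟨⟨i1⟩, ⟨i2⟩⟩ := ih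
    obtain ⟨e1⟩ := ext_shift (S1_exact n) (M n) (2 * q + 1)
    obtain ⟨e2⟩ := ext_shift (S2_exact n) (M n) (2 * q)
    obtain ⟨e3⟩ := ext_shift (S1_exact n) (M n) (2 * q + 2)
    obtain ⟨e4⟩ := ext_shift (S2_exact n) (M n) (2 * q + 1)
    exact ⟨⟨(e1.trans e2).trans i1⟩, ⟨(e3.trans e4).trans i2⟩⟩

end Complexes

/-- as abelian groups, `Ext⁰_B(A,A) ≅ A` (free abelian of rank `n+1`),
`Ext^{2q−1}_B(A,A) ≅ ℤⁿ` and `Ext^{2q}_B(A,A) ≅ ℤⁿ ⊕ ℤ/(n+1)ℤ` for `q ≥ 1`. -/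
theorem stmt6 (n : ℕ) (hn : 1 ≤ n) :
    Nonempty (Abelian.Ext (M n) (M n) 0 ≃+ A n) ∧
    Nonempty (Abelian.Ext (M n) (M n) 0 ≃+ (Fin (n + 1) → ℤ)) ∧
    ∀ q : ℕ, 1 ≤ q →
      Nonempty (Abelian.Ext (M n) (M n) (2 * q - 1) ≃+ (Fin n → ℤ)) ∧
      Nonempty (Abelian.Ext (M n) (M n) (2 * q) ≃+ ((Fin n → ℤ) × ZMod (n + 1))) := by
  have e : Abelian.Ext (M n) (M n) 0 ≃+ A n := Abelian.Ext.addEquiv₀.trans (ev1 n)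
  refine ⟨⟨e⟩, ⟨e.trans (bA n).equivFun.toAddEquiv⟩, ?_⟩
  intro q hq
  obtain ⟨q, rfl⟩ := Nat.exists_eq_add_of_le' hq
  exact ext_all n q

end
end

section
/- Let n ≥ 1, A = ℤ[x]/(x^{n+1}), and B = A ⊗_ℤ A. The graded ring HH^*(A;A) = ⊕_{m≥0} Ext^m_B(A,A), with multiplication given by the Yoneda (composition) product, is isomorphic as a graded ring to ℤ[x,u,t]/(x^{n+1}, u², (n+1)x^n t, u x^n), where the generators x, u, t have cohomological degrees 0, 1, 2 respectively. -/
open Polynomial TensorProduct CategoryTheory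

noncomputable section

/-- The ideal `(x^{n+1}, u², (n+1)xⁿt, uxⁿ)` of `ℤ[x,u,t]`, where `x = X 0`, `u = X 1`,
`t = X 2`. -/
def I (n : ℕ) : Ideal (MvPolynomial (Fin 3) ℤ) :=
  Ideal.span {MvPolynomial.X 0 ^ (n + 1), MvPolynomial.X 1 ^ 2,
    ((n : MvPolynomial (Fin 3) ℤ) + 1) * MvPolynomial.X 0 ^ n * MvPolynomial.X 2,
    MvPolynomial.X 1 * MvPolynomial.X 0 ^ n}

/-- The ring `ℤ[x,u,t]/(x^{n+1}, u², (n+1)xⁿt, uxⁿ)`. -/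
abbrev R (n : ℕ) : Type := MvPolynomial (Fin 3) ℤ ⧸ I n

/-- The degree-`m` component of `R n`, for the grading in which `x, u, t` have
cohomological degrees `0, 1, 2` respectively: the image in the quotient of the submodule of
weighted homogeneous polynomials of weighted degree `m`, with weights `0, 1, 2`. -/
def G (n m : ℕ) : Submodule ℤ (R n) :=
  (MvPolynomial.weightedHomogeneousSubmodule ℤ (![0, 1, 2] : Fin 3 → ℕ) m).map
    (Ideal.Quotient.mkₐ ℤ (I n)).toLinearMap


section Layer1

open Abelian

universe hw hv hu

variable {C : Type hu} [Category.{hv} C] [Abelian C] [HasExt.{hw} C]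

/-- The generators: `1, u, t, u t, t^2, ...` built from the periodicity class `t`. -/
def hhW {Q : C} (t : Ext Q Q 2) (u : Ext Q Q 1) : ∀ m : ℕ, Ext Q Q m
  | 0 => Ext.mk₀ (𝟙 Q)
  | 1 => u
  | (m + 2) => t.comp (hhW t u m) (by omega)

lemma hhW_mul {Q : C} (t : Ext Q Q 2) (u : Ext Q Q 1)
    (htu : u.comp t (rfl : 1 + 2 = 3) = t.comp u (rfl : 2 + 1 = 3))
    (huu : u.comp u (rfl : 1 + 1 = 2) = 0) :
    ∀ (a b c : ℕ) (h : a + b = c), (hhW t u a).comp (hhW t u b) h =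
      if Odd a ∧ Odd b then 0 else hhW t u c := by
  have key : ∀ (b c : ℕ) (h : 1 + b = c), u.comp (hhW t u b) h =
      if Odd b then 0 else hhW t u c := by
    intro b
    induction b using Nat.twoStepInduction with
    | zero => intro c h; obtain rfl : c = 1 := by omega
              simp [hhW]
    | one => intro c h; obtain rfl : c = 2 := by omega
             simp [hhW, huu]
    | more b ih _ =>
      intro c h
      obtain ⟨c, rfl⟩ : ∃ d, c = d + 2 := ⟨b + 1, by omega⟩
      simp only [hhW]
      rw [← Ext.comp_assoc u t (hhW t u b) (rfl : 1 + 2 = 3) (by omega) (by omega), htu,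
        Ext.comp_assoc t u (hhW t u b) _ (by omega : 1 + b = c) (by omega), ih]
      have : Odd (b + 2) ↔ Odd b := by grind
      simp only [this]
      split_ifs <;> simp
  intro a
  induction a using Nat.twoStepInduction with
  | zero => intro b c h; obtain rfl : b = c := by omega
            simp [hhW]
  | one => intro b c h; simpa [hhW] using key b c h
  | more a ih _ =>
    intro b c h
    obtain ⟨c, rfl⟩ : ∃ d, c = d + 2 := ⟨a + b, by omega⟩
    simp only [hhW]
    rw [Ext.comp_assoc t _ (hhW t u b) _ (by omega : a + b = c) (by omega), ih]
    have : Odd (a + 2) ↔ Odd a := by grind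
    simp only [this]
    split_ifs <;> simp

theorem hh_layer1 {S : Type*} [CommRing S] [Linear S C] {Q K P : C} [Projective P]
    (i : K ⟶ P) (p : P ⟶ Q) (j : Q ⟶ P) (q : P ⟶ K) (w1 : i ≫ p = 0) (w2 : j ≫ q = 0)
    (h1 : (ShortComplex.mk i p w1).ShortExact) (h2 : (ShortComplex.mk j q w2).ShortExact)
    (φ : K ⟶ Q) (ψ : Q ⟶ K) (y f : P ⟶ P)
    (e1 : j ≫ y = ψ ≫ i) (e2 : y ≫ p = q ≫ φ) (e3 : i ≫ f = φ ≫ j) (e4 : f ≫ q = p ≫ ψ)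
    (e5 : ψ ≫ φ = 0) (hQ : ∀ g : Q ⟶ Q, ∃ s : S, g = s • 𝟙 Q)
    (hK : ∀ g : K ⟶ Q, ∃ s : S, g = s • φ) (hi : ∀ g : P ⟶ Q, i ≫ g = 0) :
    ∃ W : ∀ m : ℕ, Ext Q Q m, W 0 = Ext.mk₀ (𝟙 Q) ∧
      (∀ (a b c : ℕ) (h : a + b = c), (W a).comp (W b) h =
        if Odd a ∧ Odd b then 0 else W c) ∧
      (∀ m (α : Ext Q Q m), ∃ s : S, α = s • W m) ∧
      (∀ s : S, s • W 0 = 0 ↔ s • 𝟙 Q = 0) ∧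
      (∀ s : S, s • W 1 = 0 ↔ s • φ = 0) ∧
      (∀ s : S, s • W 2 = 0 ↔ ∃ g : P ⟶ Q, s • 𝟙 Q = j ≫ g) ∧
      (∀ m, ∀ s : S, s • W (m + 3) = 0 ↔ s • W (m + 1) = 0) := by
  obtain ⟨d1, hd1⟩ : ∃ d : Ext Q K 1, d = h1.extClass := ⟨_, rfl⟩
  obtain ⟨d2, hd2⟩ : ∃ d : Ext K Q 1, d = h2.extClass := ⟨_, rfl⟩
  have n1 : d2.comp (Ext.mk₀ ψ) (add_zero 1) = (Ext.mk₀ φ).comp d1 (zero_add 1) := by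
    subst hd1 hd2
    exact ShortComplex.ShortExact.extClass_naturality h2 h1
      { τ₁ := ψ, τ₂ := y, τ₃ := φ, comm₁₂ := e1.symm, comm₂₃ := e2 }
  have n2 : d1.comp (Ext.mk₀ φ) (add_zero 1) = (Ext.mk₀ ψ).comp d2 (zero_add 1) := by
    subst hd1 hd2
    exact ShortComplex.ShortExact.extClass_naturality h1 h2
      { τ₁ := φ, τ₂ := f, τ₃ := ψ, comm₁₂ := e3.symm, comm₂₃ := e4 }
  -- exactness facts
  have s1 : ∀ (m : ℕ) (α : Ext Q Q (m + 1)), ∃ β : Ext K Q m, d1.comp β (by omega) = α := by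
    intro m α
    subst hd1
    exact Ext.contravariant_sequence_exact₃ h1 Q α (Ext.eq_zero_of_projective _) (by omega)
  have s2 : ∀ (m : ℕ) (α : Ext K Q (m + 1)), ∃ β : Ext Q Q m, d2.comp β (by omega) = α := by
    intro m α
    subst hd2
    exact Ext.contravariant_sequence_exact₃ h2 Q α (Ext.eq_zero_of_projective _) (by omega)
  have k1 : ∀ (m c : ℕ) (h : 1 + m = c) (α : Ext K Q m), d1.comp α h = 0 →
      ∃ β : Ext P Q m, (Ext.mk₀ i).comp β (zero_add m) = α := by
    intro m c h α hα
    subst hd1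
    exact Ext.contravariant_sequence_exact₁ h1 Q α h hα
  have k2 : ∀ (m c : ℕ) (h : 1 + m = c) (α : Ext Q Q m), d2.comp α h = 0 →
      ∃ β : Ext P Q m, (Ext.mk₀ j).comp β (zero_add m) = α := by
    intro m c h α hα
    subst hd2
    exact Ext.contravariant_sequence_exact₁ h2 Q α h hα
  have z2 : d2.comp (Ext.mk₀ j) (add_zero 1) = 0 := by
    subst hd2; exact h2.extClass_comp
  let t : Ext Q Q 2 := d1.comp d2 rfl
  let u : Ext Q Q 1 := d1.comp (Ext.mk₀ φ) (add_zero 1)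
  have ht : ∀ (m c : ℕ) (h : 2 + m = c) (α : Ext Q Q m),
      t.comp α h = d1.comp (d2.comp α (rfl : 1 + m = 1 + m)) (by omega) := by
    intro m c h α
    exact Ext.comp_assoc d1 d2 α _ _ (by omega)
  have tinj : ∀ (m : ℕ) (c : ℕ) (h : 2 + (m + 1) = c) (α : Ext Q Q (m + 1)),
      t.comp α h = 0 ↔ α = 0 := by
    intro m c h α
    refine ⟨fun h0 => ?_, fun h0 => by rw [h0, Ext.comp_zero]⟩
    rw [ht] at h0
    obtain ⟨β, hβ⟩ := k1 _ _ _ _ h0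
    have hβ0 : β = 0 := Ext.eq_zero_of_projective (n := 1 + m) β
    rw [hβ0, Ext.comp_zero] at hβ
    obtain ⟨β', hβ'⟩ := k2 _ _ _ _ hβ.symm
    rw [← hβ', Ext.eq_zero_of_projective β', Ext.comp_zero]
  have htu : u.comp t (rfl : 1 + 2 = 3) = t.comp u (rfl : 2 + 1 = 3) := by
    have a1 : u.comp t (rfl : 1 + 2 = 3) = d1.comp (d2.comp ((Ext.mk₀ ψ).comp d2 (zero_add 1)) (rfl : 1 + 1 = 2)) (rfl : 1 + 2 = 3) := by
      rw [← Ext.comp_assoc d2 (Ext.mk₀ ψ) d2 (add_zero 1) (zero_add 1) (by omega), n1]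
      simp only [u, t]
      rw [Ext.comp_assoc d1 (Ext.mk₀ φ) _ (add_zero 1) (zero_add 2) (by omega),
        Ext.comp_assoc (Ext.mk₀ φ) d1 d2 (zero_add 1) rfl (by omega)]
    rw [a1, ← n2]
    simp only [u, t]
    rw [Ext.comp_assoc d1 d2 _ _ (rfl : 1 + 1 = 2) (by omega)]
  have huu : u.comp u (rfl : 1 + 1 = 2) = 0 := by
    simp only [u]
    rw [Ext.comp_assoc d1 (Ext.mk₀ φ) _ (add_zero 1) (zero_add 1) (by omega),
      ← Ext.comp_assoc (Ext.mk₀ φ) d1 (Ext.mk₀ φ) (zero_add 1) (add_zero 1) (by omega), ← n1,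
      Ext.comp_assoc d2 (Ext.mk₀ ψ) (Ext.mk₀ φ) (add_zero 1) (zero_add 0) (by omega),
      Ext.mk₀_comp_mk₀, e5, Ext.mk₀_zero, Ext.comp_zero, Ext.comp_zero]
  refine ⟨hhW t u, rfl, hhW_mul t u htu huu, ?_, ?_, ?_, ?_, ?_⟩
  · intro m
    induction m using Nat.twoStepInduction with
    | zero =>
      intro α
      obtain ⟨g, rfl⟩ := (Ext.mk₀_bijective Q Q).2 α
      obtain ⟨s, rfl⟩ := hQ g
      exact ⟨s, by simp [hhW, Ext.mk₀_smul]⟩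
    | one =>
      intro α
      obtain ⟨β, rfl⟩ := s1 0 α
      obtain ⟨g, rfl⟩ := (Ext.mk₀_bijective K Q).2 β
      obtain ⟨s, rfl⟩ := hK g
      exact ⟨s, by simp [hhW, u, Ext.mk₀_smul]⟩
    | more m ih _ =>
      intro α
      obtain ⟨β, rfl⟩ := s1 _ α
      obtain ⟨γ, rfl⟩ := s2 _ β
      obtain ⟨s, rfl⟩ := ih γ
      refine ⟨s, ?_⟩
      simp only [hhW, Ext.comp_smul, t]
      rw [Ext.comp_assoc d1 d2 _ _ (by omega : 1 + m = m + 1) (by omega)]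
  · intro s
    simp only [hhW]
    rw [← Ext.mk₀_smul, Ext.mk₀_eq_zero_iff]
  · intro s
    simp only [hhW, u]
    rw [← Ext.comp_smul, ← Ext.mk₀_smul]
    refine ⟨fun h0 => ?_, fun h0 => by rw [h0, Ext.mk₀_zero, Ext.comp_zero]⟩
    obtain ⟨β, hβ⟩ := k1 _ _ _ _ h0
    obtain ⟨g, rfl⟩ := (Ext.mk₀_bijective P Q).2 β
    rw [Ext.mk₀_comp_mk₀, hi, Ext.mk₀_zero] at hβ
    exact (Ext.mk₀_eq_zero_iff _).1 hβ.symm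
  · intro s
    have hW2 : s • hhW t u 2 = d1.comp (d2.comp (Ext.mk₀ (s • 𝟙 Q)) (add_zero 1)) rfl := by
      simp [hhW, Ext.mk₀_smul, t]
    rw [hW2]
    constructor
    · intro h0
      obtain ⟨β, hβ⟩ := k1 _ _ _ _ h0
      rw [Ext.eq_zero_of_projective β, Ext.comp_zero] at hβ
      obtain ⟨β', hβ'⟩ := k2 _ _ _ _ hβ.symm
      obtain ⟨g, rfl⟩ := (Ext.mk₀_bijective P Q).2 β'
      rw [Ext.mk₀_comp_mk₀] at hβ'
      exact ⟨g, (Ext.mk₀_bijective Q Q).1 hβ'.symm⟩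
    · rintro ⟨g, hg⟩
      rw [hg, ← Ext.mk₀_comp_mk₀,
        ← Ext.comp_assoc d2 (Ext.mk₀ j) (Ext.mk₀ g) (add_zero 1) (zero_add 0) (by omega), z2,
        Ext.zero_comp, Ext.comp_zero]
  · intro m s
    have : s • hhW t u (m + 3) = t.comp (s • hhW t u (m + 1)) (by omega) := by
      simp [hhW]
    rw [this, tinj]

end Layer1
section Layer2

open Abelian

universe hu hw

theorem hh_layer2 {S Q : Type hu} [CommRing S] [CommRing Q] [Algebra S Q]
    [HasExt.{hw} (ModuleCat.{hu} S)] (d D y f : S)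
    (hsurj : Function.Surjective (algebraMap S Q))
    (hker : ∀ b : S, algebraMap S Q b = 0 ↔ ∃ c, b = d * c)
    (hd : ∀ b : S, d * b = 0 ↔ ∃ c, b = D * c)
    (hD : ∀ b : S, D * b = 0 → ∃ c, b = d * c)
    (hf : d * f = y * D) (hyf : algebraMap S Q (y * f) = 0)
    (hx : ∀ a : Q, algebraMap S Q D * a = 0 ↔ ∃ c, a = algebraMap S Q y * c) :
    ∃ W : ∀ m : ℕ, Ext (ModuleCat.of S Q) (ModuleCat.of S Q) m,
      W 0 = Ext.mk₀ (𝟙 (ModuleCat.of S Q)) ∧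
      (∀ (a b c : ℕ) (h : a + b = c), (W a).comp (W b) h =
        if Odd a ∧ Odd b then 0 else W c) ∧
      (∀ m (α : Ext (ModuleCat.of S Q) (ModuleCat.of S Q) m), ∃ s : S, α = s • W m) ∧
      (∀ s : S, s • W 0 = 0 ↔ algebraMap S Q s = 0) ∧
      (∀ s : S, s • W 1 = 0 ↔ algebraMap S Q y * algebraMap S Q s = 0) ∧
      (∀ s : S, s • W 2 = 0 ↔ ∃ c, algebraMap S Q s = algebraMap S Q D * c) ∧
      (∀ m, ∀ s : S, s • W (m + 3) = 0 ↔ s • W (m + 1) = 0) := by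
  have hdD : d * D = 0 := (hd D).2 ⟨1, by ring⟩
  have hmd : algebraMap S Q d = 0 := (hker d).2 ⟨1, by ring⟩
  -- maps out of Q
  have descQ : ∀ {N : Type hu} [AddCommGroup N] [Module S N] (r : N), d • r = 0 →
      ∃ g : Q →ₗ[S] N, ∀ b : S, g (algebraMap S Q b) = b • r := by
    intro N _ _ r hr
    have hwd : ∀ b b' : S, algebraMap S Q b = algebraMap S Q b' → b • r = b' • r := by
      intro b b' hbb
      obtain ⟨c, hc⟩ := (hker (b - b')).1 (by rw [map_sub, hbb, sub_self])
      rw [← sub_eq_zero, ← sub_smul, hc, mul_comm, mul_smul, hr, smul_zero]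
    have hs := Function.surjInv_eq hsurj
    refine ⟨{ toFun := fun a => Function.surjInv hsurj a • r
              map_add' := fun a b => ?_
              map_smul' := fun s a => ?_ }, fun b => hwd _ _ (hs _)⟩
    · rw [← add_smul]; apply hwd; rw [map_add, hs, hs, hs]
    · rw [RingHom.id_apply, ← mul_smul]; apply hwd
      rw [map_mul, hs, hs, Algebra.smul_def]
  have extQ : ∀ {N : Type hu} [AddCommGroup N] [Module S N] (g g' : Q →ₗ[S] N),
      g 1 = g' 1 → g = g' := by
    intro N _ _ g g' h
    ext a
    obtain ⟨b, rfl⟩ := hsurj a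
    rw [Algebra.algebraMap_eq_smul_one, map_smul, map_smul, h]
  let KK := S ⧸ Ideal.span {D}
  let qL : S →ₗ[S] KK := Submodule.mkQ (Ideal.span {D})
  have hq : ∀ b, qL b = 0 ↔ ∃ c, b = D * c := by
    intro b
    show Submodule.Quotient.mk b = 0 ↔ _
    rw [Submodule.Quotient.mk_eq_zero, Ideal.mem_span_singleton]
    rfl
  have hqs : Function.Surjective qL := Submodule.mkQ_surjective _
  have descK : ∀ {N : Type hu} [AddCommGroup N] [Module S N] (r : N), D • r = 0 →
      ∃ g : KK →ₗ[S] N, ∀ b : S, g (qL b) = b • r := by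
    intro N _ _ r hr
    refine ⟨Submodule.liftQ _ (LinearMap.toSpanSingleton S N r) ?_, fun b => ?_⟩
    · rw [Ideal.span, Submodule.span_le]
      rintro _ rfl
      simpa using hr
    · exact Submodule.liftQ_apply _ _ _
  have extK : ∀ {N : Type hu} [AddCommGroup N] [Module S N] (g g' : KK →ₗ[S] N),
      g (qL 1) = g' (qL 1) → g = g' := by
    intro N _ _ g g' h
    ext
    show g (qL 1) = g' (qL 1)
    exact h
  obtain ⟨jL, hj⟩ := descQ (N := S) D hdD
  obtain ⟨ψL, hψ⟩ := descQ (N := KK) (qL f) (by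
    rw [← map_smul, smul_eq_mul, hf, hq]; exact ⟨y, by ring⟩)
  obtain ⟨iL, hi⟩ := descK (N := S) d (by rw [smul_eq_mul, mul_comm]; exact hdD)
  obtain ⟨φL, hφ⟩ := descK (N := Q) (algebraMap S Q y) (by
    rw [Algebra.smul_def, hx]; exact ⟨1, by ring⟩)
  let pL : S →ₗ[S] Q := Algebra.linearMap S Q
  have hp : ∀ b, pL b = algebraMap S Q b := fun b => rfl
  have w1 : ModuleCat.ofHom iL ≫ ModuleCat.ofHom pL = 0 := by
    rw [← ModuleCat.ofHom_comp]
    have : pL ∘ₗ iL = 0 := by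
      apply extK
      simp [hi, hp, hmd]
    rw [this]; rfl
  have w2 : ModuleCat.ofHom jL ≫ ModuleCat.ofHom qL = 0 := by
    rw [← ModuleCat.ofHom_comp]
    have : qL ∘ₗ jL = 0 := by
      apply extQ
      rw [← map_one (algebraMap S Q)]
      rw [LinearMap.comp_apply, hj, LinearMap.zero_apply, hq]
      exact ⟨1, by simp⟩
    rw [this]; rfl
  have h1 : (ShortComplex.mk _ _ w1).ShortExact := by
    refine ShortComplex.ShortExact.mk' ?_ ?_ ?_
    · rw [ShortComplex.moduleCat_exact_iff]
      intro b hb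
      obtain ⟨c, rfl⟩ := (hker b).1 hb
      exact ⟨qL c, (hi c).trans (mul_comm _ _)⟩
    · rw [ModuleCat.mono_iff_injective]
      refine (injective_iff_map_eq_zero iL).2 fun a ha => ?_
      obtain ⟨b, rfl⟩ := hqs a
      rw [hi, smul_eq_mul, mul_comm, hd] at ha
      exact (hq b).2 ha
    · rw [ModuleCat.epi_iff_surjective]
      exact hsurj
  have h2 : (ShortComplex.mk _ _ w2).ShortExact := by
    refine ShortComplex.ShortExact.mk' ?_ ?_ ?_
    · rw [ShortComplex.moduleCat_exact_iff]
      intro b hb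
      obtain ⟨c, rfl⟩ := (hq b).1 hb
      exact ⟨algebraMap S Q c, (hj c).trans (mul_comm _ _)⟩
    · rw [ModuleCat.mono_iff_injective]
      refine (injective_iff_map_eq_zero jL).2 fun a ha => ?_
      obtain ⟨b, rfl⟩ := hsurj a
      rw [hj, smul_eq_mul, mul_comm] at ha
      exact (hker b).2 (hD b ha)
    · rw [ModuleCat.epi_iff_surjective]
      exact hqs
  have : Projective (ModuleCat.of S S) := (IsProjective.iff_projective S).1 inferInstance
  obtain ⟨W, H0, Hmul, Hs, K0, K1, K2, K3⟩ := hh_layer1 (S := S) (ModuleCat.ofHom iL)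
    (ModuleCat.ofHom pL) (ModuleCat.ofHom jL)
    (ModuleCat.ofHom qL) w1 w2 h1 h2 (ModuleCat.ofHom φL) (ModuleCat.ofHom ψL)
    (ModuleCat.ofHom (LinearMap.lsmul S S y)) (ModuleCat.ofHom (LinearMap.lsmul S S f))
    (by
      simp only [← ModuleCat.ofHom_comp]; congr 1; apply extQ
      rw [← map_one (algebraMap S Q)]
      simp only [LinearMap.comp_apply, hj, hψ, map_smul, hi]
      simp only [smul_eq_mul, LinearMap.lsmul_apply, one_mul]
      rw [← hf, mul_comm])
    (by
      simp only [← ModuleCat.ofHom_comp]; congr 1; ext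
      simp only [LinearMap.comp_apply, hφ, hp]
      simp)
    (by
      simp only [← ModuleCat.ofHom_comp]; congr 1; apply extK
      simp only [LinearMap.comp_apply, hφ, hi, one_smul, hj]
      simp only [smul_eq_mul, LinearMap.lsmul_apply]
      rw [← hf, mul_comm])
    (by
      simp only [← ModuleCat.ofHom_comp]; congr 1; ext
      simp only [LinearMap.comp_apply, hp, hψ]
      simp)
    (by
      simp only [← ModuleCat.ofHom_comp]
      have : φL ∘ₗ ψL = 0 := by
        apply extQ
        rw [← map_one (algebraMap S Q)]
        simp only [LinearMap.comp_apply, hψ, map_smul, hφ]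
        rw [one_smul, Algebra.smul_def, ← map_mul, mul_comm, hyf]; rfl
      rw [this]; rfl)
    (by
      intro g
      obtain ⟨s, hs⟩ := hsurj (g.hom 1)
      refine ⟨s, ModuleCat.hom_ext (extQ _ _ ?_)⟩
      show g.hom 1 = s • (1 : Q)
      rw [← hs, Algebra.algebraMap_eq_smul_one])
    (by
      intro g
      obtain ⟨c, hc⟩ := (hx (g.hom (qL 1))).1 (by
        rw [← Algebra.smul_def]
        have h0 : D • qL 1 = 0 := by
          rw [← map_smul, hq]; exact ⟨1, by simp⟩
        erw [← map_smul g.hom D (qL 1), h0, map_zero])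
      obtain ⟨s, rfl⟩ := hsurj c
      refine ⟨s, ModuleCat.hom_ext (extK _ _ ?_)⟩
      show g.hom (qL 1) = s • φL (qL 1)
      rw [hc, hφ, one_smul, Algebra.smul_def, mul_comm])
    (by
      intro g
      refine ModuleCat.hom_ext (extK _ _ ?_)
      show g.hom (iL (qL 1)) = 0
      rw [hi, one_smul]
      have : d = d • (1 : S) := by simp
      rw [this]
      erw [map_smul g.hom d (1 : S)]
      rw [Algebra.smul_def, hmd, zero_mul])
  refine ⟨W, H0, Hmul, Hs, ?_, ?_, ?_, K3⟩
  · intro s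
    rw [K0]
    constructor
    · intro h
      have := congrArg (fun g => g.hom (1 : Q)) h
      rw [Algebra.algebraMap_eq_smul_one]
      exact this
    · intro h
      refine ModuleCat.hom_ext (extQ _ _ ?_)
      show s • (1 : Q) = 0
      rw [← Algebra.algebraMap_eq_smul_one, h]
  · intro s
    rw [K1]
    have e : s • φL (qL 1) = algebraMap S Q y * algebraMap S Q s := by
      rw [hφ, one_smul, Algebra.smul_def, mul_comm]
    rw [← e]
    constructor
    · intro h
      exact congrArg (fun g => g.hom (qL 1)) h
    · intro h
      exact ModuleCat.hom_ext (extK _ _ h)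
  · intro s
    rw [K2]
    have hj1 : jL 1 = D := by
      rw [← map_one (algebraMap S Q), hj, one_smul]
    constructor
    · rintro ⟨g, hg⟩
      have h := congrArg (fun g => g.hom (1 : Q)) hg
      have h' : s • (1 : Q) = g.hom (jL 1) := h
      refine ⟨g.hom (1 : S), ?_⟩
      rw [Algebra.algebraMap_eq_smul_one, h', hj1, ← Algebra.smul_def]
      have : D = D • (1 : S) := by simp
      conv_lhs => rw [this]
      exact map_smul g.hom D (1 : S)
    · rintro ⟨c, hc⟩
      refine ⟨ModuleCat.ofHom (LinearMap.toSpanSingleton S Q c),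
        ModuleCat.hom_ext (extQ _ _ ?_)⟩
      show s • (1 : Q) = LinearMap.toSpanSingleton S Q c (jL 1)
      rw [hj1, ← Algebra.algebraMap_eq_smul_one, hc, LinearMap.toSpanSingleton_apply,
        Algebra.smul_def]

end Layer2
section Layer3

open Finset

theorem hh_layer3 {Q : Type} [CommRing Q] (n : ℕ) (x : Q) (hx0 : x ^ (n + 1) = 0)
    (hgen : ∀ a : Q, ∃ p : ℤ[X], aeval x p = a) (l : Q →ₗ[ℤ] ℤ)
    (hl : ∀ j, l (x ^ j) = if j = n then 1 else 0) (mu : Q ⊗[ℤ] Q →+* Q)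
    (hmu : ∀ a b, mu (a ⊗ₜ b) = a * b) :
    ∃ d D y f : Q ⊗[ℤ] Q,
      (∀ b, mu b = 0 ↔ ∃ c, b = d * c) ∧ (∀ b, d * b = 0 ↔ ∃ c, b = D * c) ∧
      (∀ b, D * b = 0 → ∃ c, b = d * c) ∧ d * f = y * D ∧ mu (y * f) = 0 ∧
      mu y = x ∧ mu D = (n + 1) * x ^ n := by
  obtain ⟨y, hy⟩ : ∃ y : Q ⊗[ℤ] Q, y = x ⊗ₜ 1 := ⟨_, rfl⟩
  obtain ⟨z, hz⟩ : ∃ y : Q ⊗[ℤ] Q, y = 1 ⊗ₜ x := ⟨_, rfl⟩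
  have hy' : ∀ i, y ^ i = (x ^ i) ⊗ₜ 1 := by
    intro i; rw [hy, Algebra.TensorProduct.tmul_pow, one_pow]
  have hz' : ∀ i, z ^ i = 1 ⊗ₜ (x ^ i) := by
    intro i; rw [hz, Algebra.TensorProduct.tmul_pow, one_pow]
  have hy0 : y ^ (n + 1) = 0 := by rw [hy', hx0, TensorProduct.zero_tmul]
  have hz0 : z ^ (n + 1) = 0 := by rw [hz', hx0, TensorProduct.tmul_zero]
  have my : mu y = x := by rw [hy, hmu, mul_one]
  have mz : mu z = x := by rw [hz, hmu, one_mul]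
  obtain ⟨D, hDdef⟩ : ∃ D : Q ⊗[ℤ] Q, D = ∑ i ∈ range (n + 1), y ^ i * z ^ (n - i) := ⟨_, rfl⟩
  have hDd : (y - z) * D = 0 := by
    have := geom_sum₂_mul y z (n + 1)
    simp only [Nat.add_sub_cancel] at this
    rw [hDdef, mul_comm, this, hy0, hz0, sub_zero]
  let lt : Q ⊗[ℤ] Q →ₗ[ℤ] Q := (TensorProduct.rid ℤ Q).toLinearMap ∘ₗ LinearMap.lTensor Q l
  have hlt : ∀ a c, lt (a ⊗ₜ c) = l c • a := by 
    intro a c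
    show (TensorProduct.rid ℤ Q) (LinearMap.lTensor Q l (a ⊗ₜ c)) = _
    rw [LinearMap.lTensor_tmul, TensorProduct.rid_tmul]
  have hlt' : ∀ a b, lt (a ⊗ₜ 1 * b) = a * lt b := by
    intro a b
    induction b using TensorProduct.induction_on with
    | zero => simp
    | tmul u v => rw [Algebra.TensorProduct.tmul_mul_tmul, hlt, hlt, one_mul, mul_smul_comm]
    | add u v hu hv => rw [mul_add, map_add, map_add, hu, hv, mul_add]
  have hc : ∀ c : Q, c = ∑ i ∈ range (n + 1), l (x ^ i * c) • x ^ (n - i) := by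
    intro c
    obtain ⟨p, rfl⟩ := hgen c
    induction p using Polynomial.induction_on' with
    | add p q hp hq =>
      simp only [map_add, mul_add, add_smul, sum_add_distrib]
      rw [← hp, ← hq]
    | monomial j k =>
      simp only [aeval_monomial, algebraMap_int_eq, eq_intCast]
      have e : ∀ i, l (x ^ i * ((k : Q) * x ^ j)) = k * (if i + j = n then 1 else 0) := by
        intro i
        have e' : x ^ i * ((k : Q) * x ^ j) = k • x ^ (i + j) := by
          rw [zsmul_eq_mul]; ring
        rw [← hl, e', map_smul, smul_eq_mul]
      simp only [e]
      by_cases hj : j ≤ n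
      · rw [sum_eq_single (n - j)]
        · rw [if_pos (by omega)]
          simp [Nat.sub_sub_self hj]
        · intro i hi hne
          rw [if_neg (by omega)]; simp
        · intro h; simp at h
      · rw [sum_eq_zero]
        · rw [show j = n + 1 + (j - n - 1) by omega, pow_add, hx0]; simp
        · intro i _
          rw [if_neg (by omega)]; simp
  have hb : ∀ b : Q ⊗[ℤ] Q, b = ∑ i ∈ range (n + 1), (lt (z ^ i * b)) ⊗ₜ 1 * z ^ (n - i) := by
    intro b
    induction b using TensorProduct.induction_on with
    | zero => simp
    | tmul u v =>
      conv_lhs => rw [hc v, TensorProduct.tmul_sum]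
      refine sum_congr rfl fun i _ => ?_
      have e1 : z ^ i * u ⊗ₜ[ℤ] v = u ⊗ₜ (x ^ i * v) := by
        rw [hz', Algebra.TensorProduct.tmul_mul_tmul, one_mul]
      rw [e1, hz', hlt, Algebra.TensorProduct.tmul_mul_tmul,
        one_mul, mul_one, TensorProduct.smul_tmul]
    | add u v hu hv =>
      simp only [mul_add, map_add, TensorProduct.add_tmul, add_mul, sum_add_distrib]
      rw [← hu, ← hv]
  have hker : ∀ b, mu b = 0 ↔ ∃ c, b = (y - z) * c := by
    intro b
    constructor
    · intro h
      have h1 : b ∈ KaehlerDifferential.ideal ℤ Q := by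
        have : ∀ b, Algebra.TensorProduct.lmul' ℤ (S := Q) b = mu b := by
          intro b
          induction b using TensorProduct.induction_on with
          | zero => simp
          | tmul u v => rw [hmu]; simp
          | add u v hu hv => rw [map_add, map_add, hu, hv]
        show Algebra.TensorProduct.lmul' ℤ (S := Q) b = 0
        rw [this, h]
      rw [← KaehlerDifferential.span_range_eq_ideal] at h1
      have h2 : Ideal.span (Set.range fun s : Q => (1 : Q) ⊗ₜ[ℤ] s - s ⊗ₜ[ℤ] (1 : Q)) ≤
          Ideal.span {y - z} := by
        rw [Ideal.span_le]
        rintro _ ⟨s, rfl⟩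
        obtain ⟨p, rfl⟩ := hgen s
        show (1 : Q) ⊗ₜ[ℤ] (aeval x p) - (aeval x p) ⊗ₜ[ℤ] (1 : Q) ∈ Ideal.span {y - z}
        induction p using Polynomial.induction_on' with
        | add p q hp hq =>
          rw [map_add, TensorProduct.tmul_add, TensorProduct.add_tmul, add_sub_add_comm]
          exact add_mem hp hq
        | monomial j k =>
          have : (1 : Q) ⊗ₜ[ℤ] (aeval x (monomial j k)) - (aeval x (monomial j k)) ⊗ₜ[ℤ] (1 : Q)
              = k • (z ^ j - y ^ j) := by
            simp only [aeval_monomial, algebraMap_int_eq, eq_intCast, ← zsmul_eq_mul]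
            rw [hz', hy', TensorProduct.tmul_smul, ← TensorProduct.smul_tmul', smul_sub]
          rw [this]
          refine zsmul_mem ?_ _
          rw [← neg_sub (y ^ j) (z ^ j)]
          refine neg_mem ?_
          rw [Ideal.mem_span_singleton]
          exact sub_dvd_pow_sub_pow y z j
      obtain ⟨c, hc⟩ := Ideal.mem_span_singleton.1 (h2 h1)
      exact ⟨c, hc⟩
    · rintro ⟨c, rfl⟩
      rw [map_mul, map_sub, my, mz, sub_self, zero_mul]
  refine ⟨y - z, D, y, ∑ j ∈ range (n + 1), z ^ (n + 1 - j) *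
    ∑ i ∈ range j, y ^ i * z ^ (j - 1 - i), hker, ?_, ?_, ?_, ?_, my, ?_⟩
  · intro b
    constructor
    · intro h
      have hzb : z * b = y * b := by rw [sub_mul, sub_eq_zero] at h; exact h.symm
      have hzi : ∀ i, z ^ i * b = y ^ i * b := by
        intro i
        induction i with
        | zero => simp
        | succ i ih => rw [pow_succ, mul_assoc, hzb, mul_left_comm, ih, pow_succ]; ring
      refine ⟨lt b ⊗ₜ 1, ?_⟩
      conv_lhs => rw [hb b]
      rw [hDdef, sum_mul]
      refine sum_congr rfl fun i _ => ?_
      rw [hzi, hy', hlt']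
      have : (x ^ i * lt b) ⊗ₜ[ℤ] (1 : Q) = (x ^ i) ⊗ₜ 1 * (lt b) ⊗ₜ 1 := by
        rw [Algebra.TensorProduct.tmul_mul_tmul, mul_one]
      rw [this]; ring
    · rintro ⟨c, rfl⟩
      rw [← mul_assoc, hDd, zero_mul]
  · intro b h
    obtain ⟨c, hc⟩ := (hker (b - mu b ⊗ₜ 1)).1 (by rw [map_sub, hmu, mul_one, sub_self])
    have h3 : D * (mu b ⊗ₜ 1) = 0 := by
      have : mu b ⊗ₜ 1 = b - (y - z) * c := by rw [← hc]; ring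
      rw [this, mul_sub, h, ← mul_assoc, mul_comm D, hDd]; simp
    have h4 : lt (D * (mu b ⊗ₜ 1)) = mu b := by
      rw [mul_comm, hlt', hDdef, map_sum, sum_eq_single 0]
      · rw [hy', hz', Algebra.TensorProduct.tmul_mul_tmul, hlt]
        simp [hl]
      · intro i hi hne
        rw [hy', hz', Algebra.TensorProduct.tmul_mul_tmul, hlt, one_mul, hl, if_neg, zero_smul]
        simp at hi; omega
      · simp
    rw [h3, map_zero] at h4
    rw [← hker]; exact h4.symm
  · have e1 : ∑ j ∈ range (n + 2), z ^ (n + 1 - j) * y ^ j = y * D := by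
      rw [sum_range_succ', hDdef, mul_sum]
      simp only [Nat.sub_zero, hz0, zero_mul, add_zero]
      refine sum_congr rfl fun i _ => ?_
      rw [show n + 1 - (i + 1) = n - i by omega]; ring
    rw [← e1, sum_range_succ _ (n + 1), hy0, mul_zero, add_zero, mul_sum]
    refine sum_congr rfl fun j hj => ?_
    have := geom_sum₂_mul y z j
    rw [mul_left_comm, mul_comm (y - z), this, mul_sub, ← pow_add,
      show n + 1 - j + j = n + 1 by simp at hj; omega, hz0, sub_zero]
  · rw [map_mul, map_sum, mul_sum]
    refine sum_eq_zero fun j hj => ?_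
    rw [map_mul, map_sum, mul_sum, mul_sum]
    refine sum_eq_zero fun i hi => ?_
    simp only [map_mul, map_pow, my, mz]
    simp at hi hj
    rw [← hx0, ← pow_add, ← pow_add, ← pow_succ']
    congr 1; omega
  · rw [hDdef, map_sum]
    rw [sum_congr rfl (g := fun _ => x ^ n)]
    · simp
    · intro i hi
      simp at hi
      rw [map_mul, map_pow, map_pow, my, mz, ← pow_add]
      congr 1; omega

end Layer3

section Layer3b

lemma hhA_gen (n : ℕ) (a : A n) : ∃ p : ℤ[X], aeval (AdjoinRoot.root ((X : ℤ[X]) ^ (n + 1))) p = a := by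
  obtain ⟨p, rfl⟩ := AdjoinRoot.mk_surjective a
  exact ⟨p, by rw [AdjoinRoot.aeval_eq]⟩

lemma hhA_pow (n : ℕ) : (AdjoinRoot.root ((X : ℤ[X]) ^ (n + 1))) ^ (n + 1) = 0 := by
  have := AdjoinRoot.eval₂_root ((X : ℤ[X]) ^ (n + 1))
  simpa using this

lemma hhA_l (n : ℕ) : ∃ l : A n →ₗ[ℤ] ℤ,
    ∀ j, l ((AdjoinRoot.root ((X : ℤ[X]) ^ (n + 1))) ^ j) = if j = n then 1 else 0 := by
  have hm : ((X : ℤ[X]) ^ (n + 1)).Monic := monic_X_pow _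
  refine ⟨Polynomial.lcoeff ℤ n ∘ₗ AdjoinRoot.modByMonicHom hm, fun j => ?_⟩
  by_cases hj : j ≤ n
  · rw [LinearMap.comp_apply, ← AdjoinRoot.mk_X, ← map_pow, AdjoinRoot.modByMonicHom_mk,
      (modByMonic_eq_self_iff hm).2 (by
        rw [degree_X_pow, degree_X_pow]; exact_mod_cast Nat.lt_succ_of_le hj)]
    simp [coeff_X_pow, eq_comm]
  · obtain ⟨k, rfl⟩ : ∃ k, j = n + 1 + k := ⟨j - n - 1, by omega⟩
    rw [pow_add (AdjoinRoot.root _), hhA_pow, zero_mul, map_zero, if_neg (by omega)]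

lemma hhA_ann1 (n : ℕ) (a : A n) : (AdjoinRoot.root ((X : ℤ[X]) ^ (n + 1))) * a = 0 ↔
    ∃ c, a = (AdjoinRoot.root ((X : ℤ[X]) ^ (n + 1))) ^ n * c := by
  constructor
  · intro h
    obtain ⟨p, rfl⟩ := AdjoinRoot.mk_surjective a
    rw [← AdjoinRoot.mk_X, ← map_mul, AdjoinRoot.mk_eq_zero, pow_succ',
      mul_dvd_mul_iff_left X_ne_zero] at h
    obtain ⟨c, rfl⟩ := h
    exact ⟨AdjoinRoot.mk _ c, by rw [← AdjoinRoot.mk_X, ← map_pow, ← map_mul]⟩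
  · rintro ⟨c, rfl⟩
    rw [← mul_assoc, ← pow_succ', hhA_pow, zero_mul]

lemma hhA_ann2 (n : ℕ) (a : A n) :
    ((n : A n) + 1) * (AdjoinRoot.root ((X : ℤ[X]) ^ (n + 1))) ^ n * a = 0 ↔
    ∃ c, a = (AdjoinRoot.root ((X : ℤ[X]) ^ (n + 1))) * c := by
  constructor
  · intro h
    obtain ⟨p, rfl⟩ := AdjoinRoot.mk_surjective a
    have e : ((n : A n) + 1) = AdjoinRoot.mk _ ((n : ℤ[X]) + 1) := by simp
    rw [e, ← AdjoinRoot.mk_X, ← map_pow, ← map_mul, ← map_mul, AdjoinRoot.mk_eq_zero,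
      mul_comm _ (X ^ n), mul_assoc, pow_succ,
      mul_dvd_mul_iff_left (pow_ne_zero _ X_ne_zero), X_dvd_iff] at h
    have h' : ((n : ℤ) + 1) * p.coeff 0 = 0 := by
      have : ((n : ℤ[X]) + 1) = C ((n : ℤ) + 1) := by simp
      rw [this, coeff_C_mul] at h
      exact h
    have h0 : p.coeff 0 = 0 := by
      rcases mul_eq_zero.1 h' with h' | h'
      · omega
      · exact h'
    obtain ⟨c, rfl⟩ := X_dvd_iff.2 h0
    exact ⟨AdjoinRoot.mk _ c, by rw [← AdjoinRoot.mk_X, ← map_mul]⟩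
  · rintro ⟨c, rfl⟩
    rw [mul_assoc, ← mul_assoc _ _ c, ← pow_succ, hhA_pow, zero_mul, mul_zero]

end Layer3b
section Layer4

/-- The image of a variable in `R n`. -/
def hhX (n : ℕ) (k : Fin 3) : R n := Ideal.Quotient.mk (I n) (MvPolynomial.X k)

lemma hhX_rel0 (n : ℕ) : hhX n 0 ^ (n + 1) = 0 := by
  unfold hhX
  rw [← map_pow, Ideal.Quotient.eq_zero_iff_mem]
  exact Ideal.subset_span (by simp)

lemma hhX_rel1 (n : ℕ) : hhX n 1 ^ 2 = 0 := by
  unfold hhX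
  rw [← map_pow, Ideal.Quotient.eq_zero_iff_mem]
  exact Ideal.subset_span (by simp)

lemma hhX_rel2 (n : ℕ) : ((n : R n) + 1) * hhX n 0 ^ n * hhX n 2 = 0 := by
  have : ((n : R n) + 1) = Ideal.Quotient.mk (I n) ((n : MvPolynomial (Fin 3) ℤ) + 1) := by simp
  unfold hhX
  rw [this, ← map_pow, ← map_mul, ← map_mul, Ideal.Quotient.eq_zero_iff_mem]
  exact Ideal.subset_span (by simp)

lemma hhX_rel3 (n : ℕ) : hhX n 1 * hhX n 0 ^ n = 0 := by
  unfold hhX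
  rw [← map_pow, ← map_mul, Ideal.Quotient.eq_zero_iff_mem]
  exact Ideal.subset_span (by simp)

lemma hhR_lift (n : ℕ) {T : Type} [CommRing T] (v : Fin 3 → T) (h0 : v 0 ^ (n + 1) = 0)
    (h1 : v 1 ^ 2 = 0) (h2 : ((n : T) + 1) * v 0 ^ n * v 2 = 0) (h3 : v 1 * v 0 ^ n = 0) :
    ∃ r : R n →+* T, ∀ k, r (hhX n k) = v k := by
  refine ⟨Ideal.Quotient.lift (I n) (MvPolynomial.aeval (R := ℤ) v).toRingHom ?_, fun k => ?_⟩
  · intro a ha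
    have : I n ≤ RingHom.ker (MvPolynomial.aeval (R := ℤ) v).toRingHom := by
      unfold I
      rw [Ideal.span_le]
      rintro a ha
      simp only [Set.mem_insert_iff, Set.mem_singleton_iff] at ha
      rcases ha with rfl | rfl | rfl | rfl
      · simpa [RingHom.mem_ker] using h0
      · simpa [RingHom.mem_ker] using h1
      · simpa only [SetLike.mem_coe, RingHom.mem_ker, AlgHom.toRingHom_eq_coe, RingHom.coe_coe,
          map_mul, map_add, map_pow, map_natCast, map_one, MvPolynomial.aeval_X] using h2
      · simpa [RingHom.mem_ker] using h3
    exact this ha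
  · simp [hhX]

/-- The structure map `A → R`. -/
def hhi (n : ℕ) : A n →+* R n :=
  AdjoinRoot.lift (Int.castRingHom (R n)) (hhX n 0) (by simp [hhX_rel0])

lemma hhi_root (n : ℕ) : hhi n (AdjoinRoot.root _) = hhX n 0 := by
  simp [hhi]

lemma hhA_homext (n : ℕ) {T : Type} [CommRing T] (f g : A n →+* T)
    (h : f (AdjoinRoot.root _) = g (AdjoinRoot.root _)) : f = g := by
  refine RingHom.ext fun a => ?_
  obtain ⟨p, rfl⟩ := hhA_gen n a
  induction p using Polynomial.induction_on' with
  | add p q hp hq => rw [map_add, map_add, map_add, hp, hq]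
  | monomial j k => simp [aeval_monomial, h]

/-- The monomials `u^ε t^k` of degree `m`. -/
def hhw (n m : ℕ) : R n := hhX n 1 ^ (m % 2) * hhX n 2 ^ (m / 2)

lemma hhw_mul (n a b : ℕ) : hhw n a * hhw n b =
    if Odd a ∧ Odd b then 0 else hhw n (a + b) := by
  have e : hhw n a * hhw n b = hhX n 1 ^ (a % 2 + b % 2) * hhX n 2 ^ (a / 2 + b / 2) := by
    unfold hhw; ring
  rw [e]
  split_ifs with h
  · rw [Nat.odd_iff.1 h.1, Nat.odd_iff.1 h.2, hhX_rel1, zero_mul]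
  · unfold hhw
    rw [Nat.odd_iff, Nat.odd_iff] at h
    congr 2 <;> omega

lemma hhw_wh (m : ℕ) : MvPolynomial.IsWeightedHomogeneous (![0, 1, 2] : Fin 3 → ℕ)
    ((MvPolynomial.X 1 ^ (m % 2) * MvPolynomial.X 2 ^ (m / 2) : MvPolynomial (Fin 3) ℤ)) m := by
  have h1 := ((MvPolynomial.isWeightedHomogeneous_X ℤ (![0, 1, 2] : Fin 3 → ℕ) 1).pow (m % 2)).mul
    ((MvPolynomial.isWeightedHomogeneous_X ℤ (![0, 1, 2] : Fin 3 → ℕ) 2).pow (m / 2))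
  convert h1 using 1
  simp
  omega

lemma hhg_mem (n m : ℕ) (a : A n) : hhi n a * hhw n m ∈ G n m := by
  obtain ⟨p, rfl⟩ := hhA_gen n a
  induction p using Polynomial.induction_on' with
  | add p q hp hq => rw [map_add, map_add, add_mul]; exact add_mem hp hq
  | monomial j k =>
    have e : hhi n (aeval (AdjoinRoot.root _) (monomial j k)) * hhw n m =
        k • (hhX n 0 ^ j * hhw n m) := by
      simp [aeval_monomial, hhi_root, mul_assoc]
    rw [e]
    refine Submodule.smul_mem _ _ ?_
    refine ⟨MvPolynomial.X 0 ^ j * (MvPolynomial.X 1 ^ (m % 2) * MvPolynomial.X 2 ^ (m / 2)),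
      ?_, ?_⟩
    · have := ((MvPolynomial.isWeightedHomogeneous_X ℤ (![0, 1, 2] : Fin 3 → ℕ) 0).pow j).mul
        (hhw_wh m)
      rw [SetLike.mem_coe, MvPolynomial.mem_weightedHomogeneousSubmodule]
      convert this using 1
      simp
    · simp [hhX, hhw]

lemma hhg_surj (n m : ℕ) (r : R n) (hr : r ∈ G n m) : ∃ a : A n, hhi n a * hhw n m = r := by
  obtain ⟨q, hq, rfl⟩ := hr
  rw [SetLike.mem_coe, MvPolynomial.mem_weightedHomogeneousSubmodule] at hq
  let g : A n →+ R n := (AddMonoidHom.mulRight (hhw n m)).comp (hhi n).toAddMonoidHom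
  suffices h : Ideal.Quotient.mk (I n) q ∈ g.range by
    obtain ⟨a, ha⟩ := h
    exact ⟨a, ha⟩
  rw [MvPolynomial.as_sum q, map_sum]
  refine sum_mem fun d hd => ?_
  have hw := hq (MvPolynomial.mem_support_iff.1 hd)
  have hw' : d 1 + 2 * d 2 = m := by
    rw [← hw, Finsupp.weight_apply, Finsupp.sum_fintype _ _ (by simp), Fin.sum_univ_three]
    simp [mul_comm]
  generalize MvPolynomial.coeff d q = c
  have e : Ideal.Quotient.mk (I n) (MvPolynomial.monomial d c) =
      (c : R n) * (hhX n 0 ^ d 0 * hhX n 1 ^ d 1 * hhX n 2 ^ d 2) := by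
    rw [MvPolynomial.monomial_eq, Finsupp.prod_fintype _ _ (by simp), Fin.prod_univ_three]
    simp [hhX]
  rw [e]
  by_cases h1 : 2 ≤ d 1
  · have hz : hhX n 1 ^ d 1 = 0 := by
      obtain ⟨k, hk⟩ := Nat.exists_eq_add_of_le h1
      rw [hk, pow_add (hhX n 1), hhX_rel1, zero_mul]
    rw [hz, mul_zero, zero_mul, mul_zero]
    exact zero_mem _
  · refine ⟨(c : A n) * AdjoinRoot.root _ ^ d 0, ?_⟩
    have hg : ∀ a, g a = hhi n a * hhw n m := fun a => rfl
    rw [hg, map_mul, map_pow, map_intCast, hhi_root, hhw, show m % 2 = d 1 by omega,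
      show m / 2 = d 2 by omega]
    ring

lemma hhg_ker0 (n : ℕ) (a : A n) : hhi n a * hhw n 0 = 0 ↔ a = 0 := by
  constructor
  · intro h
    obtain ⟨r, hr⟩ := hhR_lift n (T := A n) ![AdjoinRoot.root _, 0, 0] (hhA_pow n) (by simp)
      (by simp) (by simp)
    have e : r.comp (hhi n) = RingHom.id _ := by
      apply hhA_homext
      rw [RingHom.comp_apply, hhi_root, hr]; rfl
    have h' := congrArg r h
    rw [map_mul, ← RingHom.comp_apply, e] at h'
    simpa [hhw] using h'
  · rintro rfl; simp

lemma hhg_ker_even (n k : ℕ) (a : A n) : hhi n a * hhw n (2 * k + 2) = 0 ↔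
    ∃ c, a = ((n : A n) + 1) * (AdjoinRoot.root ((X : ℤ[X]) ^ (n + 1))) ^ n * c := by
  constructor
  · intro h
    let J : Ideal (A n) := Ideal.span {((n : A n) + 1) * (AdjoinRoot.root ((X : ℤ[X]) ^ (n + 1))) ^ n}
    let T := (A n ⧸ J)[X]
    let cc : A n →+* T := (C : (A n ⧸ J) →+* T).comp (Ideal.Quotient.mk J)
    have hcc : ∀ b, cc b = 0 ↔ b ∈ J := by
      intro b
      show C (Ideal.Quotient.mk J b) = 0 ↔ _
      rw [C_eq_zero, Ideal.Quotient.eq_zero_iff_mem]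
    obtain ⟨r, hr⟩ := hhR_lift n (T := T) ![cc (AdjoinRoot.root _), 0, X]
      (by
        show cc (AdjoinRoot.root _) ^ (n + 1) = 0
        rw [← map_pow, hhA_pow, map_zero])
      (by simp)
      (by
        show ((n : T) + 1) * cc (AdjoinRoot.root _) ^ n * X = 0
        have : ((n : T) + 1) = cc ((n : A n) + 1) := by simp
        rw [this, ← map_pow, ← map_mul, (hcc _).2 (Ideal.mem_span_singleton_self _), zero_mul])
      (by simp)
    have e : r.comp (hhi n) = cc := by
      apply hhA_homext
      rw [RingHom.comp_apply, hhi_root, hr]; rfl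
    have hw : r (hhw n (2 * k + 2)) = X ^ (k + 1) := by
      rw [hhw, map_mul, map_pow, map_pow, hr, hr, show (2 * k + 2) % 2 = 0 by omega,
        show (2 * k + 2) / 2 = k + 1 by omega, pow_zero, one_mul]; rfl
    have h' := congrArg r h
    rw [map_mul, ← RingHom.comp_apply, e, hw, map_zero] at h'
    have h2 : coeff (C (Ideal.Quotient.mk J a) * X ^ (k + 1) : (A n ⧸ J)[X]) (k + 1) = 0 := by
      refine (congrArg (fun p : (A n ⧸ J)[X] => coeff p (k + 1)) h').trans ?_
      exact coeff_zero _
    have h3 : Ideal.Quotient.mk J a = 0 := by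
      rwa [coeff_C_mul, coeff_X_pow_self, mul_one] at h2
    rw [Ideal.Quotient.eq_zero_iff_mem, Ideal.mem_span_singleton] at h3
    exact h3
  · rintro ⟨c, rfl⟩
    have : hhw n (2 * k + 2) = hhX n 2 * hhX n 2 ^ k := by
      rw [hhw, show (2 * k + 2) % 2 = 0 by omega,
        show (2 * k + 2) / 2 = k + 1 by omega]; ring
    have h2 := hhX_rel2 n
    rw [this, map_mul, map_mul, map_pow, hhi_root, map_add, map_natCast, map_one]
    linear_combination hhi n c * hhX n 2 ^ k * h2

lemma hhg_ker_odd (n k : ℕ) (a : A n) : hhi n a * hhw n (2 * k + 1) = 0 ↔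
    ∃ c, a = (AdjoinRoot.root ((X : ℤ[X]) ^ (n + 1))) ^ n * c := by
  constructor
  · intro h
    let J : Ideal (A n) := Ideal.span {(AdjoinRoot.root ((X : ℤ[X]) ^ (n + 1))) ^ n}
    let T := (DualNumber (A n ⧸ J))[X]
    let cc : A n →+* T := (C : DualNumber (A n ⧸ J) →+* T).comp
      ((TrivSqZeroExt.inlHom (A n ⧸ J) (A n ⧸ J)).comp (Ideal.Quotient.mk J))
    have hx : cc (AdjoinRoot.root _) ^ n = 0 := by
      rw [← map_pow]
      show C (TrivSqZeroExt.inl (Ideal.Quotient.mk J _)) = 0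
      rw [Ideal.Quotient.eq_zero_iff_mem.2 (Ideal.mem_span_singleton_self _)]
      simp
    obtain ⟨r, hr⟩ := hhR_lift n (T := T) ![cc (AdjoinRoot.root _), C DualNumber.eps, X]
      (by
        show cc (AdjoinRoot.root _) ^ (n + 1) = 0
        rw [pow_succ, hx, zero_mul])
      (by
        show (C DualNumber.eps : T) ^ 2 = 0
        rw [← C_pow, pow_two, DualNumber.eps_mul_eps, C_0])
      (by
        show ((n : T) + 1) * cc (AdjoinRoot.root _) ^ n * X = 0
        rw [hx]; simp)
      (by
        show C DualNumber.eps * cc (AdjoinRoot.root _) ^ n = 0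
        rw [hx]; simp)
    have e : r.comp (hhi n) = cc := by
      apply hhA_homext
      rw [RingHom.comp_apply, hhi_root, hr]; rfl
    have hw : r (hhw n (2 * k + 1)) = C DualNumber.eps * X ^ k := by
      rw [hhw, map_mul, map_pow, map_pow, hr, hr, show (2 * k + 1) % 2 = 1 by omega,
        show (2 * k + 1) / 2 = k by omega, pow_one]; rfl
    have h' := congrArg r h
    rw [map_mul, ← RingHom.comp_apply, e, hw, map_zero] at h'
    have h2 : coeff (C (TrivSqZeroExt.inl (Ideal.Quotient.mk J a)) * (C DualNumber.eps * X ^ k) :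
        (DualNumber (A n ⧸ J))[X]) k = 0 := by
      refine (congrArg (fun p : (DualNumber (A n ⧸ J))[X] => coeff p k) h').trans ?_
      exact coeff_zero _
    have h3 : Ideal.Quotient.mk J a = 0 := by
      rw [coeff_C_mul, coeff_C_mul, coeff_X_pow_self, mul_one] at h2
      have h4 := congrArg TrivSqZeroExt.snd h2
      simpa [TrivSqZeroExt.snd_mul] using h4
    rw [Ideal.Quotient.eq_zero_iff_mem, Ideal.mem_span_singleton] at h3
    exact h3
  · rintro ⟨c, rfl⟩
    have : hhw n (2 * k + 1) = hhX n 1 * hhX n 2 ^ k := by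
      rw [hhw, show (2 * k + 1) % 2 = 1 by omega,
        show (2 * k + 1) / 2 = k by omega]; ring
    have h2 := hhX_rel3 n
    rw [this, map_mul, map_pow, hhi_root]
    linear_combination hhi n c * hhX n 2 ^ k * h2

lemma hh_equiv {X Y Z : Type*} [AddCommGroup X] [AddCommGroup Y] [AddCommGroup Z]
    (f : X →+ Y) (g : X →+ Z) (hf : Function.Surjective f) (hg : Function.Surjective g)
    (h : ∀ x, f x = 0 ↔ g x = 0) : ∃ e : Y ≃+ Z, ∀ x, e (f x) = g x := by
  have hk : f.ker = g.ker := by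
    ext x; exact h x
  let e1 := QuotientAddGroup.quotientKerEquivOfSurjective f hf
  let e2 := QuotientAddGroup.quotientKerEquivOfSurjective g hg
  refine ⟨(e1.symm.trans (QuotientAddGroup.quotientAddEquivOfEq hk)).trans e2, fun x => ?_⟩
  have : e1.symm (f x) = (x : X ⧸ f.ker) := by
    rw [AddEquiv.symm_apply_eq]; rfl
  rw [AddEquiv.trans_apply, AddEquiv.trans_apply, this]
  rfl

end Layer4
section Main

open Abelian

universe hu' hw'

theorem hh_layer2' {S Q : Type hu'} [CommRing S] [CommRing Q] [Algebra S Q]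
    [HasExt.{hw'} (ModuleCat.{hu'} S)] (d D y f : S)
    (hsurj : Function.Surjective (algebraMap S Q))
    (hker : ∀ b : S, algebraMap S Q b = 0 ↔ ∃ c, b = d * c)
    (hd : ∀ b : S, d * b = 0 ↔ ∃ c, b = D * c)
    (hD : ∀ b : S, D * b = 0 → ∃ c, b = d * c)
    (hf : d * f = y * D) (hyf : algebraMap S Q (y * f) = 0)
    (hx : ∀ a : Q, algebraMap S Q D * a = 0 ↔ ∃ c, a = algebraMap S Q y * c)
    (N : ModuleCat.{hu'} S) (hN : N = ModuleCat.of S Q) :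
    ∃ F : ∀ m : ℕ, S →+ Ext N N m,
      F 0 1 = Ext.mk₀ (𝟙 N) ∧
      (∀ (a b : ℕ) (s s' : S), (F a s).comp (F b s') (rfl : a + b = a + b) =
        if Odd a ∧ Odd b then 0 else F (a + b) (s * s')) ∧
      (∀ m, Function.Surjective (F m)) ∧
      (∀ s : S, F 0 s = 0 ↔ algebraMap S Q s = 0) ∧
      (∀ k, ∀ s : S, F (2 * k + 1) s = 0 ↔ algebraMap S Q y * algebraMap S Q s = 0) ∧
      (∀ k, ∀ s : S, F (2 * k + 2) s = 0 ↔ ∃ c, algebraMap S Q s = algebraMap S Q D * c) := by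
  subst hN
  obtain ⟨W, H0, Hmul, Hs, K0, K1, K2, K3⟩ := hh_layer2 d D y f hsurj hker hd hD hf hyf hx
  refine ⟨fun m => AddMonoidHom.mk' (fun s => s • W m) (fun s s' => add_smul _ _ _),
    ?_, ?_, ?_, K0, ?_, ?_⟩
  · show (1 : S) • W 0 = _
    rw [one_smul, H0]
  · intro a b s s'
    show (s • W a).comp (s' • W b) (rfl : a + b = a + b) =
        if Odd a ∧ Odd b then 0 else (s * s') • W (a + b)
    rw [Ext.smul_comp, Ext.comp_smul, Hmul]
    split_ifs
    · simp
    · rw [mul_smul]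
  · intro m α
    obtain ⟨s, hs⟩ := Hs m α
    exact ⟨s, hs.symm⟩
  · intro k s
    show s • W (2 * k + 1) = 0 ↔ _
    induction k with
    | zero => exact K1 s
    | succ k ih => rw [← ih]; exact K3 (2 * k) s
  · intro k s
    show s • W (2 * k + 2) = 0 ↔ _
    induction k with
    | zero => exact K2 s
    | succ k ih => rw [← ih]; exact K3 (2 * k + 1) s

end Main

/-- the graded ring `HH^*(A;A) = ⊕ₘ Ext^m_B(A,A)` with the Yoneda
(composition) product is isomorphic as a graded ring to
`ℤ[x,u,t]/(x^{n+1}, u², (n+1)xⁿt, uxⁿ)` with `x, u, t` in degrees `0, 1, 2`: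
there are degreewise additive isomorphisms onto the graded components of the target ring,
sending the identity to `1` and intertwining the Yoneda product with the ring product. -/
theorem stmt7 (n : ℕ) (hn : 1 ≤ n) :
    ∃ e : ∀ m : ℕ, Abelian.Ext (M n) (M n) m ≃+ G n m,
      ((e 0 (Abelian.Ext.mk₀ (𝟙 (M n))) : R n) = 1) ∧
      ∀ (a b : ℕ) (α : Abelian.Ext (M n) (M n) a) (β : Abelian.Ext (M n) (M n) b),
        ((e (a + b) (α.comp β rfl) : R n) = (e a α : R n) * (e b β : R n)) := by
  obtain ⟨l, hl⟩ := hhA_l n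
  have hmu : ∀ a b : A n, algebraMap (B n) (A n) (a ⊗ₜ b) = a * b := fun a b =>
    Algebra.TensorProduct.lmul'_apply_tmul a b
  obtain ⟨d, D, y, f, c1, c2, c3, c4, c5, c6, c7⟩ := hh_layer3 n (AdjoinRoot.root _) (hhA_pow n)
    (hhA_gen n) l hl (algebraMap (B n) (A n)) hmu
  have hsurj : Function.Surjective (algebraMap (B n) (A n)) := fun a =>
    ⟨a ⊗ₜ 1, by rw [hmu, mul_one]⟩
  obtain ⟨F, H0, Hmul, Hs, K0, K1, K2⟩ := hh_layer2' d D y f hsurj c1 c2 c3 c4 c5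
    (by rw [c6, c7]; exact hhA_ann2 n) (M n) rfl
  rw [c6] at K1
  rw [c7] at K2
  have key : ∀ m : ℕ, ∃ e : Abelian.Ext (M n) (M n) m ≃+ G n m,
      ∀ s : B n, (e (F m s) : R n) =
        hhi n (algebraMap (B n) (A n) s) * hhw n m := by
    intro m
    let Gm : B n →+ G n m :=
      AddMonoidHom.mk' (fun s => ⟨hhi n (algebraMap (B n) (A n) s) * hhw n m, hhg_mem n m _⟩)
        (fun s s' => Subtype.ext (by
          show hhi n (algebraMap (B n) (A n) (s + s')) * hhw n m =
            hhi n (algebraMap (B n) (A n) s) * hhw n m +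
            hhi n (algebraMap (B n) (A n) s') * hhw n m
          rw [map_add, map_add, add_mul]))
    obtain ⟨e, he⟩ := hh_equiv (F m) Gm (Hs m)
      (fun r => by
        obtain ⟨a, ha⟩ := hhg_surj n m r.1 r.2
        obtain ⟨s, rfl⟩ := hsurj a
        exact ⟨s, Subtype.ext ha⟩)
      (fun s => by
        have hG : Gm s = 0 ↔ hhi n (algebraMap (B n) (A n) s) * hhw n m = 0 := Subtype.ext_iff
        rw [hG]
        rcases Nat.even_or_odd' m with ⟨k, rfl | rfl⟩
        · rcases k with _ | k
          · rw [hhg_ker0]; exact K0 s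
          · exact (K2 k s).trans (hhg_ker_even n k _).symm
        · rw [hhg_ker_odd, ← hhA_ann1]; exact K1 k s)
    exact ⟨e, fun s => congrArg Subtype.val (he s)⟩
  choose e he using key
  refine ⟨e, ?_, ?_⟩
  · rw [← H0, he, map_one, map_one, one_mul]
    simp [hhw]
  · intro a b α β
    obtain ⟨s, rfl⟩ := Hs a α
    obtain ⟨s', rfl⟩ := Hs b β
    rw [Hmul, he, he]
    have h2 := hhw_mul n a b
    rw [mul_mul_mul_comm, h2]
    split_ifs with hab
    · rw [map_zero, mul_zero]; rfl
    · rw [he, map_mul, map_mul]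

end
end
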